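/- Let S be a separable and reversible semitopological semigroup and K a weakly compact convex subset of a Banach space. Then every separately weakly continuous and super asymptotically nonexpansive action of S on K has a common fixed point. -/

import Mathlib

/-- A (nonempty) left ideal of a semigroup `S`: `I ≠ ∅` and `S * I ⊆ I`. -/
def IsLeftIdeal {S : Type*} [Semigroup S] (I : Set S) : Prop :=
  I.Nonempty ∧ ∀ s : S, ∀ i ∈ I, s * i ∈ I

/-- A (nonempty) right ideal of a semigroup `S`: `I ≠ ∅` and `I * S ⊆ I`. -/
def IsRightIdeal {S : Type*} [Semigroup S] (I : Set S) : Prop :=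
  I.Nonempty ∧ ∀ i ∈ I, ∀ s : S, i * s ∈ I

/-- `S` is right reversible: any two closed left ideals of `S` intersect. -/
def RightReversible (S : Type*) [Semigroup S] [TopologicalSpace S] : Prop :=
  ∀ I J : Set S, IsLeftIdeal I → IsLeftIdeal J → IsClosed I → IsClosed J → (I ∩ J).Nonempty

/-- `S` is left reversible: any two closed right ideals of `S` intersect. -/
def LeftReversible (S : Type*) [Semigroup S] [TopologicalSpace S] : Prop :=
  ∀ I J : Set S, IsRightIdeal I → IsRightIdeal J → IsClosed I → IsClosed J → (I ∩ J).Nonempty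

/-- Super asymptotically nonexpansive action. -/
def SuperAsympNonexpansive {S E : Type*} [Semigroup S] [NormedAddCommGroup E]
    (act : S → E → E) (K : Set E) : Prop :=
  ∀ x ∈ K, ∀ t : S, ∃ I : Set S, IsLeftIdeal I ∧ I ⊆ Set.range (· * t) ∧
    ∀ s ∈ I, ∀ y ∈ K, ‖act s x - act s y‖ ≤ ‖x - y‖

/-!
The idea of going far out in `S` is made precise by two filters, generated by the closed left and
the closed right ideals; reversibility makes both of them proper. Far out along left ideals the
action does not move points away from a given point, and far out along right ideals every orbit in a
minimal set `F` runs into `C = ⋂ a, a • F`. Hence `C` is nonempty and every `s` maps some part of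
`C` onto `C`. Since `S` is separable, `F` is norm separable, and Baire's theorem provides a
relatively weakly open piece of `F` of small norm diameter. Finitely many translates pull this piece
back to a cover of `F`, and asymptotic nonexpansiveness turns the cover into a finite norm net of
some `a • F`; so `C` is norm totally bounded.

If `C` had two points, some point of its convex hull would lie within some `r < diam C` of every
point of `C`. By `C ⊆ s • C`, the points within `r` of all of `C` stay so in the limit along left
ideals, and they would cut down a minimal closed convex set containing `C`. Hence `C` is a single
point, and it is fixed.
-/

open Filter Topology Set TopologicalSpace Metric
open scoped Pointwise omegaLimit

section ClosedIdeals

variable {S : Type*} [Semigroup S] [TopologicalSpace S]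

/-- The filter generated by the closed left ideals of `S`; it is proper exactly when any finitely
many of them meet, and stands for "far out in `S`". The ideals `closure (S t)` generate it since
every closed left ideal contains one of them. -/
def closedLeftIdealFilter (S : Type*) [Semigroup S] [TopologicalSpace S] : Filter S :=
  ⨅ t : S, 𝓟 (closure (range (· * t)))

/-- The filter generated by the closed right ideals of `S`, by way of the ideals
`closure (t S)`. -/
def closedRightIdealFilter (S : Type*) [Semigroup S] [TopologicalSpace S] : Filter S :=
  ⨅ t : S, 𝓟 (closure (range (t * ·)))

theorem closure_range_mul_right_mem_closedLeftIdealFilter (t : S) :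
    closure (range (· * t)) ∈ closedLeftIdealFilter S :=
  mem_iInf_of_mem t (mem_principal_self _)

theorem closure_range_mul_left_mem_closedRightIdealFilter (t : S) :
    closure (range (t * ·)) ∈ closedRightIdealFilter S :=
  mem_iInf_of_mem t (mem_principal_self _)

variable [SeparatelyContinuousMul S]

theorem isLeftIdeal_closure_range_mul_right [Nonempty S] (t : S) :
    IsLeftIdeal (closure (range (· * t))) := by
  refine ⟨(range_nonempty _).closure, fun s i hi =>
    map_mem_closure (f := (s * ·)) SeparatelyContinuousMul.continuous_const_mul hi ?_⟩
  rintro _ ⟨a, rfl⟩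
  exact ⟨s * a, mul_assoc s a t⟩

theorem isRightIdeal_closure_range_mul_left [Nonempty S] (t : S) :
    IsRightIdeal (closure (range (t * ·))) := by
  refine ⟨(range_nonempty _).closure, fun i hi s =>
    map_mem_closure (f := (· * s)) SeparatelyContinuousMul.continuous_mul_const hi ?_⟩
  rintro _ ⟨a, rfl⟩
  exact ⟨a * s, (mul_assoc t a s).symm⟩

theorem RightReversible.neBot_closedLeftIdealFilter [Nonempty S] (h : RightReversible S) :
    (closedLeftIdealFilter S).NeBot := by
  refine iInf_neBot_of_directed' (fun t t' => ?_)
    fun t => principal_neBot_iff.2 (range_nonempty _).closure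
  obtain ⟨u, hu, hu'⟩ := h _ _ (isLeftIdeal_closure_range_mul_right t)
    (isLeftIdeal_closure_range_mul_right t') isClosed_closure isClosed_closure
  exact ⟨u,
    principal_mono.2 <| closure_minimal
      (range_subset_iff.2 fun s => (isLeftIdeal_closure_range_mul_right t).2 s u hu)
      isClosed_closure,
    principal_mono.2 <| closure_minimal
      (range_subset_iff.2 fun s => (isLeftIdeal_closure_range_mul_right t').2 s u hu')
      isClosed_closure⟩

theorem LeftReversible.neBot_closedRightIdealFilter [Nonempty S] (h : LeftReversible S) :
    (closedRightIdealFilter S).NeBot := by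
  refine iInf_neBot_of_directed' (fun t t' => ?_)
    fun t => principal_neBot_iff.2 (range_nonempty _).closure
  obtain ⟨u, hu, hu'⟩ := h _ _ (isRightIdeal_closure_range_mul_left t)
    (isRightIdeal_closure_range_mul_left t') isClosed_closure isClosed_closure
  exact ⟨u,
    principal_mono.2 <| closure_minimal
      (range_subset_iff.2 ((isRightIdeal_closure_range_mul_left t).2 u hu)) isClosed_closure,
    principal_mono.2 <| closure_minimal
      (range_subset_iff.2 ((isRightIdeal_closure_range_mul_left t').2 u hu')) isClosed_closure⟩

theorem tendsto_const_mul_closedLeftIdealFilter (s : S) :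
    Tendsto (s * ·) (closedLeftIdealFilter S) (closedLeftIdealFilter S) := by
  refine tendsto_iInf.2 fun t => tendsto_principal.2 ?_
  filter_upwards [closure_range_mul_right_mem_closedLeftIdealFilter t] with u hu
  exact (have : Nonempty S := ⟨s⟩; isLeftIdeal_closure_range_mul_right t).2 s u hu

end ClosedIdeals

section MinimalSets

variable {X : Type*} [TopologicalSpace X]

theorem exists_minimal_isClosed_nonempty [CompactSpace X] {P : Set X → Prop}
    (hP : ∀ c : Set (Set X), c.Nonempty → (∀ A ∈ c, P A) → P (⋂₀ c)) {L : Set X}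
    (hLc : IsClosed L) (hLne : L.Nonempty) (hL : P L) :
    ∃ A ⊆ L, Minimal (fun B => IsClosed B ∧ B.Nonempty ∧ P B) A := by
  refine zorn_superset_nonempty {B | IsClosed B ∧ B.Nonempty ∧ P B} (fun c hc hchain hne => ?_) L
    ⟨hLc, hLne, hL⟩
  have : Nonempty c := hne.to_subtype
  refine ⟨⋂₀ c, ⟨isClosed_sInter fun A hA => (hc hA).1, ?_, hP c hne fun A hA => (hc hA).2.2⟩,
    fun A hA => sInter_subset_of_mem hA⟩
  exact IsCompact.nonempty_sInter_of_directed_nonempty_isCompact_isClosed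
    (IsChain.directedOn (r := fun A B : Set X => A ⊇ B) hchain.symm) (fun A hA => (hc hA).2.1)
    (fun A hA => (hc hA).1.isCompact) fun A hA => (hc hA).1

/-- A minimal set of the action of `S` on `X`: a nonempty closed invariant set in which every
orbit is dense. -/
structure IsMinimalInvariant (S : Type*) {X : Type*} [TopologicalSpace X] [SMul S X]
    (F : Set X) : Prop where
  isClosed : IsClosed F
  nonempty : F.Nonempty
  smul_mem (s : S) {x : X} : x ∈ F → s • x ∈ F
  subset_closure_orbit {x : X} : x ∈ F → F ⊆ closure (range fun s : S => s • x)

theorem IsMinimalInvariant.exists_finset_smul_mem {S : Type*} [SMul S X]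
    [CompactSpace X] [ContinuousConstSMul S X] {F V : Set X} (hF : IsMinimalInvariant S F)
    (hV : IsOpen V) (hFV : (F ∩ V).Nonempty) :
    ∃ T : Finset S, ∀ y ∈ F, ∃ s ∈ T, s • y ∈ V := by
  obtain ⟨p, hpF, hpV⟩ := hFV
  obtain ⟨T, hT⟩ := hF.isClosed.isCompact.elim_finite_subcover (fun s : S => (s • ·) ⁻¹' V)
    (fun s => hV.preimage (continuous_const_smul s)) fun y hy => by
      obtain ⟨_, hs, s, rfl⟩ := mem_closure_iff.1 (hF.subset_closure_orbit hy hpF) V hV hpV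
      exact mem_iUnion.2 ⟨s, hs⟩
  exact ⟨T, fun y hy => by simpa using hT hy⟩

theorem IsMinimalInvariant.isSeparable_image {S : Type*} [SMul S X] [TopologicalSpace S]
    [SeparableSpace S] {M : Type*} [TopologicalSpace M]
    {f : X → M} (hcont : ∀ x : X, Continuous fun s : S => s • x)
    (hsep : ∀ D : Set X, D.Countable → IsSeparable (f '' closure D)) {F : Set X}
    (hF : IsMinimalInvariant S F) : IsSeparable (f '' F) := by
  obtain ⟨x, hx⟩ := hF.nonempty
  obtain ⟨D, hD, hDdense⟩ := exists_countable_dense S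
  refine (hsep _ (hD.image (· • x))).mono (image_mono ((hF.subset_closure_orbit hx).trans ?_))
  exact closure_minimal ((hcont x).range_subset_closure_image_dense hDdense) isClosed_closure

variable {S : Type*} [Semigroup S] [SemigroupAction S X] [ContinuousConstSMul S X]

theorem smul_mem_omegaLimit_closedLeftIdealFilter [TopologicalSpace S]
    [SeparatelyContinuousMul S] (s : S) {x y : X}
    (hy : y ∈ ω (closedLeftIdealFilter S) (· • ·) {x}) :
    s • y ∈ ω (closedLeftIdealFilter S) (· • ·) {x} :=
  omegaLimit_subset_of_tendsto (· • ·) {x} (tendsto_const_mul_closedLeftIdealFilter s) <|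
    mapsTo_omegaLimit _ (mapsTo_id {x}) (fun t z => (mul_smul s t z).symm)
      (continuous_const_smul s) hy

theorem exists_isMinimalInvariant_subset [CompactSpace X] [Nonempty S] {L : Set X}
    (hLc : IsClosed L) (hLne : L.Nonempty) (hL : ∀ s : S, ∀ x ∈ L, s • x ∈ L) :
    ∃ F ⊆ L, IsMinimalInvariant S F := by
  obtain ⟨F, hFL, hF⟩ := exists_minimal_isClosed_nonempty
    (P := fun A => ∀ s : S, ∀ x ∈ A, s • x ∈ A)
    (fun c _ hc s x hx A hA => hc A hA s x (hx A hA)) hLc hLne hL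
  obtain ⟨hFc, hFne, hFinv⟩ := hF.prop
  refine ⟨F, hFL, hFc, hFne, fun s _ => hFinv s _, fun {x} hx => ?_⟩
  refine hF.le_of_le ⟨isClosed_closure, (range_nonempty _).closure, fun s y hy => ?_⟩
    (closure_minimal (range_subset_iff.2 fun s => hFinv s x hx) hFc)
  refine map_mem_closure (continuous_const_smul s) hy ?_
  rintro _ ⟨a, rfl⟩
  exact ⟨s * a, mul_smul s a x⟩

end MinimalSets

section InvariantCore

variable {S X : Type*} [Semigroup S] [TopologicalSpace S] [TopologicalSpace X] [CompactSpace X]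
  [T2Space X] [SemigroupAction S X] [ContinuousConstSMul S X] {F : Set X}

theorem eventually_smul_mem_smul_set (hcont : ∀ x : X, Continuous fun s : S => s • x)
    (hFc : IsClosed F) (hF : ∀ s : S, ∀ x ∈ F, s • x ∈ F) (a : S) :
    ∀ᶠ u in closedRightIdealFilter S, ∀ z ∈ F, u • z ∈ a • F := by
  filter_upwards [closure_range_mul_left_mem_closedRightIdealFilter a] with u hu z hz
  have haF : IsClosed (a • F) := (hFc.isCompact.smul a).isClosed
  refine closure_minimal ?_ (haF.preimage (hcont z)) hu
  rintro _ ⟨b, rfl⟩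
  exact ⟨b • z, hF b z hz, (mul_smul a b z).symm⟩

theorem mem_iInter_smul_set_of_mapClusterPt (hcont : ∀ x : X, Continuous fun s : S => s • x)
    (hFc : IsClosed F) (hF : ∀ s : S, ∀ x ∈ F, s • x ∈ F) {z : S → X} (hz : ∀ u, z u ∈ F) {y : X}
    (hy : MapClusterPt y (closedRightIdealFilter S) fun u => u • z u) :
    y ∈ ⋂ a : S, a • F :=
  mem_iInter.2 fun a => (hFc.isCompact.smul a).isClosed.mem_of_mapClusterPt hy <|
    (eventually_smul_mem_smul_set hcont hFc hF a).mono fun u hu => hu (z u) (hz u)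

theorem nonempty_iInter_smul_set [(closedRightIdealFilter S).NeBot]
    (hcont : ∀ x : X, Continuous fun s : S => s • x) (hFc : IsClosed F) (hFne : F.Nonempty)
    (hF : ∀ s : S, ∀ x ∈ F, s • x ∈ F) : (⋂ a : S, a • F).Nonempty := by
  obtain ⟨x, hx⟩ := hFne
  obtain ⟨y, hy⟩ := exists_clusterPt_of_compactSpace (map (· • x) (closedRightIdealFilter S))
  exact ⟨y, mem_iInter_smul_set_of_mapClusterPt hcont hFc hF (fun _ => hx) hy⟩

theorem iInter_smul_set_subset_smul_set [(closedRightIdealFilter S).NeBot]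
    (hcont : ∀ x : X, Continuous fun s : S => s • x) (hFc : IsClosed F)
    (hF : ∀ s : S, ∀ x ∈ F, s • x ∈ F) (s : S) : ⋂ a : S, a • F ⊆ s • ⋂ a : S, a • F := by
  intro y hy
  have hsu : ∀ u : S, ∃ z ∈ F, s • u • z = y := fun u => by
    obtain ⟨z, hz, hzy⟩ := mem_iInter.1 hy (s * u)
    exact ⟨z, hz, by rw [← mul_smul]; exact hzy⟩
  choose z hzF hzy using hsu
  obtain ⟨w, hw⟩ :=
    exists_clusterPt_of_compactSpace (map (fun u => u • z u) (closedRightIdealFilter S))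
  have hsw : s • w = y :=
    (isClosed_singleton.preimage (continuous_const_smul s)).mem_of_mapClusterPt hw
      (Eventually.of_forall hzy)
  exact ⟨w, mem_iInter_smul_set_of_mapClusterPt hcont hFc hF hzF hw, hsw⟩

end InvariantCore

section TotalBoundedness

variable {X M : Type*} [TopologicalSpace X] [PseudoMetricSpace M] {f : X → M}

theorem isClosed_setOf_dist_le_of_lowerSemicontinuous
    (hlsc : LowerSemicontinuous fun p : X × X => dist (f p.1) (f p.2)) {Y : Type*}
    [TopologicalSpace Y] {g h : Y → X} (hg : Continuous g) (hh : Continuous h) (r : ℝ) :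
    IsClosed {y | dist (f (g y)) (f (h y)) ≤ r} :=
  (hlsc.isClosed_preimage r).preimage (hg.prodMk hh)

theorem exists_isOpen_dist_le_of_isSeparable_range [BaireSpace X] [Nonempty X]
    (hlsc : LowerSemicontinuous fun p : X × X => dist (f p.1) (f p.2))
    (hsep : IsSeparable (range f)) {ε : ℝ} (hε : 0 < ε) :
    ∃ V : Set X, IsOpen V ∧ V.Nonempty ∧ ∀ x ∈ V, ∀ y ∈ V, dist (f x) (f y) ≤ ε := by
  obtain ⟨D, hDf, hD, hfD⟩ := hsep.exists_countable_dense_subset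
  have : Countable D := hD.to_subtype
  have hclosed : ∀ c : D, IsClosed {x | dist (f x) c ≤ ε / 2} := by
    rintro ⟨_, hc⟩
    obtain ⟨x, rfl⟩ := hDf hc
    exact isClosed_setOf_dist_le_of_lowerSemicontinuous hlsc continuous_id continuous_const _
  have hcover : ⋃ c : D, {x | dist (f x) c ≤ ε / 2} = univ := by
    refine eq_univ_of_forall fun x => mem_iUnion.2 ?_
    obtain ⟨c, hc, hxc⟩ := Metric.mem_closure_iff.1 (hfD (mem_range_self x)) _ (half_pos hε)
    exact ⟨⟨c, hc⟩, hxc.le⟩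
  obtain ⟨c, hc⟩ := nonempty_interior_of_iUnion_of_closed hclosed hcover
  have hdist : ∀ x ∈ interior {x | dist (f x) c ≤ ε / 2}, dist (f x) c ≤ ε / 2 :=
    fun x hx => (interior_subset hx :)
  refine ⟨_, isOpen_interior, hc, fun x hx y hy => ?_⟩
  calc dist (f x) (f y) ≤ dist (f x) c + dist (f y) c := dist_triangle_right _ _ _
    _ ≤ ε / 2 + ε / 2 := add_le_add (hdist x hx) (hdist y hy)
    _ = ε := add_halves ε

variable {S : Type*} [Semigroup S] [SemigroupAction S X]

/-- The action of `S` on `X` is asymptotically nonexpansive for the distance that `f` pulls back: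
for every `x` all elements of some left ideal `S t` move no point away from `x`. The ideal may
depend on `x`, but not on the second point. -/
def AsympNonexpansive (S : Type*) {X M : Type*} [Semigroup S] [SemigroupAction S X]
    [PseudoMetricSpace M] (f : X → M) : Prop :=
  ∀ x : X, ∃ t : S, ∀ (s : S) (y : X),
    dist (f ((s * t) • x)) (f ((s * t) • y)) ≤ dist (f x) (f y)

variable [TopologicalSpace S]

theorem AsympNonexpansive.eventually_dist_smul_le (han : AsympNonexpansive S f)
    (hcont : ∀ x : X, Continuous fun s : S => s • x)
    (hlsc : LowerSemicontinuous fun p : X × X => dist (f p.1) (f p.2)) (x : X) :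
    ∀ᶠ u in closedLeftIdealFilter S, ∀ y, dist (f (u • x)) (f (u • y)) ≤ dist (f x) (f y) := by
  obtain ⟨t, ht⟩ := han x
  filter_upwards [closure_range_mul_right_mem_closedLeftIdealFilter t] with u hu y
  exact closure_minimal (range_subset_iff.2 fun s => ht s y)
    (isClosed_setOf_dist_le_of_lowerSemicontinuous hlsc (hcont x) (hcont y) _) hu

variable [CompactSpace X]

-- If `v` is a limit of elements `a t s`, any cluster point `q` of the points `a t p` will do.
theorem AsympNonexpansive.eventually_exists_dist_smul_le (han : AsympNonexpansive S f)
    (hcont : ∀ x : X, Continuous fun s : S => s • x)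
    (hlsc : LowerSemicontinuous fun p : X × X => dist (f p.1) (f p.2)) (p : X) (s : S) :
    ∀ᶠ v in closedLeftIdealFilter S,
      ∃ q : X, ∀ y, dist (f q) (f (v • y)) ≤ dist (f p) (f (s • y)) := by
  obtain ⟨t, ht⟩ := han p
  filter_upwards [closure_range_mul_right_mem_closedLeftIdealFilter (t * s)] with v hv
  let graph : Set (S × X) := range fun a => (a * (t * s), (a * t) • p)
  have hfst : Prod.fst '' closure graph = closure (range (· * (t * s))) := by
    rw [← (isClosedMap_fst_of_compactSpace (X := S) (Y := X)).closure_image_eq_of_continuous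
      continuous_fst, ← range_comp]
    rfl
  obtain ⟨⟨_, q⟩, hq, rfl⟩ := hfst.superset hv
  refine ⟨q, fun y => ?_⟩
  refine closure_minimal (range_subset_iff.2 fun a => ?_)
    (isClosed_setOf_dist_le_of_lowerSemicontinuous hlsc continuous_snd
      ((hcont y).comp continuous_fst) _) hq
  change dist (f ((a * t) • p)) (f ((a * (t * s)) • y)) ≤ _
  rw [← mul_assoc, mul_smul _ s y]
  exact ht a (s • y)

variable [T2Space X] [ContinuousConstSMul S X]

theorem IsMinimalInvariant.exists_image_smul_set_subset_iUnion_closedBall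
    [(closedLeftIdealFilter S).NeBot] {F : Set X} (hF : IsMinimalInvariant S F)
    (han : AsympNonexpansive S f) (hcont : ∀ x : X, Continuous fun s : S => s • x)
    (hlsc : LowerSemicontinuous fun p : X × X => dist (f p.1) (f p.2))
    (hsep : IsSeparable (f '' F)) {ε : ℝ} (hε : 0 < ε) :
    ∃ (v : S) (Q : Set M), Q.Finite ∧ f '' (v • F) ⊆ ⋃ q ∈ Q, closedBall q ε := by
  have : CompactSpace F := isCompact_iff_compactSpace.1 hF.isClosed.isCompact
  have : Nonempty F := hF.nonempty.to_subtype
  obtain ⟨_, ⟨V, hV, rfl⟩, ⟨⟨p, hpF⟩, hpV⟩, hVε⟩ :=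
    exists_isOpen_dist_le_of_isSeparable_range (f := f ∘ ((↑) : F → X))
      (hlsc.comp (continuous_subtype_val.prodMap continuous_subtype_val))
      (by rwa [range_comp, Subtype.range_coe]) hε
  obtain ⟨T, hT⟩ := hF.exists_finset_smul_mem hV ⟨p, hpF, hpV⟩
  obtain ⟨v, hv⟩ := ((eventually_all_finset T).2 fun s _ =>
    han.eventually_exists_dist_smul_le hcont hlsc p s).exists
  have : Nonempty X := ⟨p⟩
  choose! q hq using hv
  refine ⟨v, (f ∘ q) '' T, T.finite_toSet.image _, ?_⟩
  rintro _ ⟨_, ⟨y, hy, rfl⟩, rfl⟩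
  obtain ⟨s, hs, hsV⟩ := hT y hy
  refine mem_biUnion (mem_image_of_mem _ hs) (mem_closedBall'.2 ((hq s hs y).trans ?_))
  exact hVε ⟨p, hpF⟩ hpV ⟨s • y, hF.smul_mem s hy⟩ hsV

theorem IsMinimalInvariant.totallyBounded_image_iInter_smul_set
    [(closedLeftIdealFilter S).NeBot] {F : Set X} (hF : IsMinimalInvariant S F)
    (han : AsympNonexpansive S f) (hcont : ∀ x : X, Continuous fun s : S => s • x)
    (hlsc : LowerSemicontinuous fun p : X × X => dist (f p.1) (f p.2))
    (hsep : IsSeparable (f '' F)) : TotallyBounded (f '' ⋂ a : S, a • F) := by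
  refine Metric.totallyBounded_iff.2 fun ε hε => ?_
  obtain ⟨v, Q, hQ, hvF⟩ :=
    hF.exists_image_smul_set_subset_iUnion_closedBall han hcont hlsc hsep (half_pos hε)
  exact ⟨Q, hQ, (image_mono (iInter_subset _ v)).trans <| hvF.trans <|
    iUnion₂_mono fun q _ => closedBall_subset_ball (half_lt_self hε)⟩

end TotalBoundedness

section NormalStructure

variable {E : Type*} [SeminormedAddCommGroup E] [NormedSpace ℝ E]

-- The mean of a finite `d / 2`-net works, `d` being the diameter: each point is within `d / 2` of
-- at least one of the averaged points.
theorem exists_mem_convexHull_subset_closedBall_of_totallyBounded {C : Set E}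
    (hC : TotallyBounded C) (hd : 0 < diam C) :
    ∃ u ∈ convexHull ℝ C, ∃ r < diam C, C ⊆ closedBall u r := by
  obtain ⟨t, htC, htfin, hnet⟩ := finite_approx_of_totallyBounded hC (diam C / 2) (half_pos hd)
  lift t to Finset E using htfin
  have hCne : C.Nonempty := by
    by_contra! h
    simp [h] at hd
  have htne : t.Nonempty := by
    obtain ⟨q, hq, -⟩ := mem_iUnion₂.1 (hnet hCne.some_mem)
    exact ⟨q, hq⟩
  set w : ℝ := (t.card : ℝ)⁻¹
  have hcard : (0 : ℝ) < t.card := Nat.cast_pos.2 htne.card_pos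
  have hw : 0 < w := inv_pos.2 hcard
  have hsum : ∑ _q ∈ t, w = 1 := by
    rw [Finset.sum_const, nsmul_eq_mul, mul_inv_cancel₀ hcard.ne']
  refine ⟨∑ q ∈ t, w • q, (convex_convexHull ℝ C).sum_mem (fun _ _ => hw.le) hsum
    fun q hq => subset_convexHull ℝ C (htC hq), diam C - w * (diam C / 2),
    sub_lt_self _ (by positivity), fun y hy => ?_⟩
  obtain ⟨p, hp, hyp⟩ := mem_iUnion₂.1 (hnet hy)
  have hgap : w * (diam C / 2) ≤ ∑ q ∈ t, w * (diam C - dist q y) :=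
    calc w * (diam C / 2) ≤ w * (diam C - dist p y) := by
          rw [mem_ball'] at hyp
          gcongr
          linarith
      _ ≤ ∑ q ∈ t, w * (diam C - dist q y) :=
          Finset.single_le_sum (f := fun q => w * (diam C - dist q y)) (fun q hq =>
            mul_nonneg hw.le (sub_nonneg.2 (dist_le_diam_of_mem hC.isBounded (htC hq) hy))) hp
  rw [mem_closedBall']
  calc dist (∑ q ∈ t, w • q) y ≤ ∑ q ∈ t, w * dist q y :=
        (convexOn_dist y convex_univ).map_sum_le (fun _ _ => hw.le) hsum fun _ _ => mem_univ _
    _ = diam C - ∑ q ∈ t, w * (diam C - dist q y) := by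
        simp only [mul_sub, Finset.sum_sub_distrib, ← Finset.sum_mul, hsum, one_mul, sub_sub_cancel]
    _ ≤ diam C - w * (diam C / 2) := sub_le_sub_left hgap _

end NormalStructure

section FixedPoint

variable {S X E : Type*} [Semigroup S] [TopologicalSpace S] [TopologicalSpace X]
  [SemigroupAction S X] [NormedAddCommGroup E] [NormedSpace ℝ E] {f : X → E}

/-- A set is convex absorbing if its image under `f` is convex and if it contains the limit points
of the orbits of its elements along the closed left ideals of `S`. Invariance is not required, since
the sets cut out by norm balls below need not be invariant. -/
def IsConvexAbsorbing (S : Type*) {X E : Type*} [Semigroup S] [TopologicalSpace S]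
    [TopologicalSpace X] [SemigroupAction S X] [NormedAddCommGroup E] [NormedSpace ℝ E]
    (f : X → E) (A : Set X) : Prop :=
  Convex ℝ (f '' A) ∧ ∀ x ∈ A, ω (closedLeftIdealFilter S) (· • ·) {x} ⊆ A

theorem isConvexAbsorbing_univ (hconv : Convex ℝ (range f)) : IsConvexAbsorbing S f univ :=
  ⟨by rwa [image_univ], fun _ _ => subset_univ _⟩

theorem IsConvexAbsorbing.sInter (hf : f.Injective) {c : Set (Set X)} (hc : c.Nonempty)
    (h : ∀ A ∈ c, IsConvexAbsorbing S f A) : IsConvexAbsorbing S f (⋂₀ c) := by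
  refine ⟨?_, fun x hx => subset_sInter fun A hA => (h A hA).2 x (hx A hA)⟩
  rw [sInter_eq_biInter, hf.injOn.image_biInter_eq hc]
  exact convex_iInter₂ fun A hA => (h A hA).1

theorem IsConvexAbsorbing.inter_preimage_closedBall (hcont : ∀ x : X, Continuous fun s : S => s • x)
    (hlsc : LowerSemicontinuous fun p : X × X => dist (f p.1) (f p.2))
    (han : AsympNonexpansive S f) {A C : Set X} (hA : IsConvexAbsorbing S f A)
    (hC : ∀ s : S, C ⊆ s • C) (r : ℝ) :
    IsConvexAbsorbing S f (A ∩ f ⁻¹' ⋂ z ∈ C, closedBall (f z) r) := by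
  refine ⟨?_, ?_⟩
  · rw [image_inter_preimage]
    exact hA.1.inter (convex_iInter₂ fun z _ => convex_closedBall (f z) r)
  rintro x ⟨hxA, hxr⟩ y hy
  refine ⟨hA.2 x hxA hy, mem_iInter₂.2 fun z hz => ?_⟩
  refine (isClosed_setOf_dist_le_of_lowerSemicontinuous hlsc continuous_id continuous_const
    r).mem_of_mapClusterPt ((mem_omegaLimit_singleton_iff_mapClusterPt _ _ _ _).1 hy) ?_
  filter_upwards [han.eventually_dist_smul_le hcont hlsc x] with u hu
  obtain ⟨z', hz', rfl⟩ := hC u hz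
  exact (hu z').trans (mem_iInter₂.1 hxr z' hz')

theorem subsingleton_of_minimal_isConvexAbsorbing (hcont : ∀ x : X, Continuous fun s : S => s • x)
    (hlsc : LowerSemicontinuous fun p : X × X => dist (f p.1) (f p.2)) (hf : f.Injective)
    (han : AsympNonexpansive S f) {A C : Set X}
    (hA : Minimal (fun B => IsClosed B ∧ B.Nonempty ∧ IsConvexAbsorbing S f B) A) (hCA : C ⊆ A)
    (hC : ∀ s : S, C ⊆ s • C) (hCtb : TotallyBounded (f '' C)) : C.Subsingleton := by
  obtain ⟨hAc, -, hAabs⟩ := hA.prop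
  intro x hx y hy
  by_contra hxy
  have hdiam : 0 < diam (f '' C) := (dist_pos.2 (hf.ne hxy)).trans_le <|
    dist_le_diam_of_mem hCtb.isBounded (mem_image_of_mem f hx) (mem_image_of_mem f hy)
  obtain ⟨_, hu, r, hr, hCr⟩ := exists_mem_convexHull_subset_closedBall_of_totallyBounded hCtb hdiam
  obtain ⟨u, huA, rfl⟩ := convexHull_min (image_mono hCA) hAabs.1 hu
  have hclosed : IsClosed (f ⁻¹' ⋂ z ∈ C, closedBall (f z) r) := by
    simp only [preimage_iInter]
    exact isClosed_biInter fun z _ => isClosed_setOf_dist_le_of_lowerSemicontinuous hlsc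
      continuous_id continuous_const r
  have hball : A ⊆ A ∩ f ⁻¹' ⋂ z ∈ C, closedBall (f z) r :=
    hA.le_of_le ⟨hAc.inter hclosed, ⟨u, huA, mem_iInter₂.2 fun z hz =>
      mem_closedBall_comm.1 (hCr (mem_image_of_mem f hz))⟩,
      hAabs.inter_preimage_closedBall hcont hlsc han hC r⟩ inter_subset_left
  have hr0 : 0 ≤ r := nonneg_of_mem_closedBall (hCr (mem_image_of_mem f hx))
  refine hr.not_ge (diam_le_of_forall_dist_le hr0 ?_)
  rintro _ ⟨a, ha, rfl⟩ _ ⟨b, hb, rfl⟩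
  exact mem_iInter₂.1 (hball (hCA ha)).2 b hb

theorem exists_forall_smul_eq_of_asympNonexpansive [Nonempty S] [SeparableSpace S]
    [SeparatelyContinuousMul S] [CompactSpace X] [T2Space X] [Nonempty X] [ContinuousConstSMul S X]
    (hlrev : LeftReversible S) (hrrev : RightReversible S)
    (hcont : ∀ x : X, Continuous fun s : S => s • x)
    (hlsc : LowerSemicontinuous fun p : X × X => dist (f p.1) (f p.2))
    (hsep : ∀ D : Set X, D.Countable → IsSeparable (f '' closure D)) (hf : f.Injective)
    (hconv : Convex ℝ (range f)) (han : AsympNonexpansive S f) :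
    ∃ x : X, ∀ s : S, s • x = x := by
  have := hrrev.neBot_closedLeftIdealFilter
  have := hlrev.neBot_closedRightIdealFilter
  obtain ⟨A, -, hA⟩ := exists_minimal_isClosed_nonempty (P := IsConvexAbsorbing S f)
    (fun c hc => IsConvexAbsorbing.sInter hf hc) isClosed_univ univ_nonempty
    (isConvexAbsorbing_univ hconv)
  obtain ⟨x₀, hx₀⟩ := hA.prop.2.1
  obtain ⟨F, hFL, hF⟩ := exists_isMinimalInvariant_subset (S := S)
    (isClosed_omegaLimit (closedLeftIdealFilter S) (· • ·) {x₀})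
    (nonempty_omegaLimit _ _ _ (singleton_nonempty x₀))
    fun s _ => smul_mem_omegaLimit_closedLeftIdealFilter s
  have hFA : F ⊆ A := hFL.trans (hA.prop.2.2.2 x₀ hx₀)
  have hFinv : ∀ s : S, ∀ x ∈ F, s • x ∈ F := fun s _ => hF.smul_mem s
  have hCF : ⋂ a : S, a • F ⊆ F :=
    (iInter_subset _ (Classical.arbitrary S)).trans (image_subset_iff.2 (hFinv _))
  have hCinv := iInter_smul_set_subset_smul_set hcont hF.isClosed hFinv
  have hC : (⋂ a : S, a • F).Subsingleton :=
    subsingleton_of_minimal_isConvexAbsorbing hcont hlsc hf han hA (hCF.trans hFA) hCinv <|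
      hF.totallyBounded_image_iInter_smul_set han hcont hlsc (hF.isSeparable_image hcont hsep)
  obtain ⟨x, hx⟩ := nonempty_iInter_smul_set hcont hF.isClosed hF.nonempty hFinv
  refine ⟨x, fun s => ?_⟩
  obtain ⟨y, hy, hyx⟩ := hCinv s hx
  rwa [hC hy hx] at hyx

end FixedPoint

section WeakTopology

variable {E : Type*} [NormedAddCommGroup E] [NormedSpace ℝ E]

theorem isClosed_toWeakSpace_image {A : Set E} (hA : Convex ℝ A) (hAc : IsClosed A) :
    IsClosed (toWeakSpace ℝ E '' A) := by
  rw [← hAc.closure_eq, hA.toWeakSpace_closure ℝ]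
  exact isClosed_closure

theorem lowerSemicontinuous_dist_toWeakSpace_symm :
    LowerSemicontinuous fun p : WeakSpace ℝ E × WeakSpace ℝ E =>
      dist ((toWeakSpace ℝ E).symm p.1) ((toWeakSpace ℝ E).symm p.2) := by
  refine lowerSemicontinuous_iff_isClosed_preimage.2 fun r => ?_
  have hball := (isClosed_toWeakSpace_image (convex_closedBall (0 : E) r)
    isClosed_closedBall).preimage (continuous_fst.sub continuous_snd)
  convert hball using 1
  ext p
  simp [LinearEquiv.image_eq_preimage_symm, dist_eq_norm]

-- The norm-closed span of a countable set is norm separable and, by Mazur's theorem, weakly closed.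
theorem isSeparable_toWeakSpace_symm_image_closure {D : Set (WeakSpace ℝ E)} (hD : D.Countable) :
    IsSeparable ((toWeakSpace ℝ E).symm '' closure D) := by
  set N : Submodule ℝ E := Submodule.span ℝ ((toWeakSpace ℝ E).symm '' D)
  have hN : IsSeparable (closure (N : Set E)) := (hD.image _).isSeparable.span.closure
  refine hN.mono (image_subset_iff.2 (closure_minimal (fun d hd => ?_) ?_))
  · exact mem_preimage.2 (subset_closure (Submodule.subset_span (mem_image_of_mem _ hd)))
  · rw [← LinearEquiv.image_eq_preimage_symm]
    exact isClosed_toWeakSpace_image N.convex.closure isClosed_closure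

end WeakTopology

theorem SuperAsympNonexpansive.exists_forall_norm_sub_le {S E : Type*} [Semigroup S] [Nonempty S]
    [NormedAddCommGroup E] {act : S → E → E} {K : Set E} (h : SuperAsympNonexpansive act K) {x : E}
    (hx : x ∈ K) :
    ∃ t : S, ∀ s : S, ∀ y ∈ K, ‖act (s * t) x - act (s * t) y‖ ≤ ‖x - y‖ := by
  obtain ⟨I, ⟨⟨t, ht⟩, hI⟩, -, hle⟩ := h x hx (Classical.arbitrary S)
  exact ⟨t, fun s => hle (s * t) (hI s t ht)⟩

theorem common_fixed_point_separable_reversible_general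
    {S E : Type*} [Semigroup S] [TopologicalSpace S] [SeparableSpace S]
    [NormedAddCommGroup E] [NormedSpace ℝ E]
    (hmulL : ∀ t : S, Continuous fun s => t * s)
    (hmulR : ∀ t : S, Continuous fun s => s * t)
    (hlrev : LeftReversible S) (hrrev : RightReversible S)
    (K : Set E) (hKne : K.Nonempty) (hKconv : Convex ℝ K)
    (hKcomp : IsCompact (toWeakSpace ℝ E '' K))
    (act : S → E → E) (hmaps : ∀ s : S, MapsTo (act s) K K)
    (haction : ∀ s t : S, ∀ x ∈ K, act (s * t) x = act s (act t x))
    (hcontS : ∀ x ∈ K, Continuous fun s : S => toWeakSpace ℝ E (act s x))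
    (hcontK : ∀ s : S, ContinuousOn
      (fun x : WeakSpace ℝ E => toWeakSpace ℝ E (act s ((toWeakSpace ℝ E).symm x)))
      (toWeakSpace ℝ E '' K))
    (hasymp : ∀ x ∈ K, ∃ t : S, ∀ s : S, ∀ y ∈ K,
      ‖act (s * t) x - act (s * t) y‖ ≤ ‖x - y‖) :
    ∃ x₀ ∈ K, ∀ s : S, act s x₀ = x₀ := by
  let X := toWeakSpace ℝ E '' K
  let f : X → E := fun x => (toWeakSpace ℝ E).symm x
  have hfK : ∀ x : X, f x ∈ K := by
    rintro ⟨_, x, hx, rfl⟩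
    simpa [f] using hx
  let : SemigroupAction S X :=
    { smul s x := ⟨toWeakSpace ℝ E (act s (f x)), mem_image_of_mem _ (hmaps s (hfK x))⟩
      mul_smul s t x := Subtype.ext (congrArg (toWeakSpace ℝ E) (haction s t (f x) (hfK x))) }
  have : ContinuousConstSMul S X := ⟨fun s => (hcontK s).domRestrict.subtype_mk _⟩
  have : SeparatelyContinuousMul S := ⟨hmulL _, hmulR _⟩
  have : CompactSpace X := isCompact_iff_compactSpace.1 hKcomp
  have : Nonempty X := (hKne.image _).to_subtype
  have : Nonempty S := hKne.elim fun x hx => (hasymp x hx).nonempty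
  have hrange : range f = K := by
    ext x
    simp [f, X]
  have hlsc : LowerSemicontinuous fun p : X × X => dist (f p.1) (f p.2) :=
    lowerSemicontinuous_dist_toWeakSpace_symm.comp
      (continuous_subtype_val.prodMap continuous_subtype_val)
  have hsep : ∀ D : Set X, D.Countable → IsSeparable (f '' closure D) := fun D hD => by
    refine (isSeparable_toWeakSpace_symm_image_closure (hD.image Subtype.val)).mono ?_
    rw [← image_image]
    exact image_mono (image_closure_subset_closure_image continuous_subtype_val)
  have han : AsympNonexpansive S f := fun x => by
    obtain ⟨t, ht⟩ := hasymp (f x) (hfK x)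
    exact ⟨t, fun s y => by rw [dist_eq_norm, dist_eq_norm]; exact ht s (f y) (hfK y)⟩
  obtain ⟨x, hx⟩ := exists_forall_smul_eq_of_asympNonexpansive hlrev hrrev
    (fun x => (hcontS (f x) (hfK x)).subtype_mk _) hlsc hsep
    ((toWeakSpace ℝ E).symm.injective.comp Subtype.val_injective) (hrange ▸ hKconv) han
  exact ⟨f x, hfK x, fun s => congrArg f (hx s)⟩

/-- let `S` be a separable and reversible (both left and right reversible)
semitopological semigroup and `K` a nonempty weakly compact convex subset of a Banach
space.  Every separately weakly continuous and super asymptotically nonexpansive action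
of `S` on `K` has a common fixed point. -/
theorem common_fixed_point_separable_reversible
    {S E : Type*} [Semigroup S] [TopologicalSpace S] [T2Space S]
    [TopologicalSpace.SeparableSpace S]
    [NormedAddCommGroup E] [NormedSpace ℝ E] [CompleteSpace E]
    -- `S` is a semitopological semigroup: multiplication is separately continuous
    (hmulL : ∀ t : S, Continuous fun s => t * s)
    (hmulR : ∀ t : S, Continuous fun s => s * t)
    (hlrev : LeftReversible S) (hrrev : RightReversible S)
    (K : Set E) (hKne : K.Nonempty) (hKconv : Convex ℝ K)
    (hKcomp : IsCompact (toWeakSpace ℝ E '' K))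
    (act : S → E → E) (hmaps : ∀ s : S, Set.MapsTo (act s) K K)
    (haction : ∀ s t : S, ∀ x ∈ K, act (s * t) x = act s (act t x))
    -- the action is separately weakly continuous
    (hcontS : ∀ x ∈ K, Continuous fun s : S => toWeakSpace ℝ E (act s x))
    (hcontK : ∀ s : S, ContinuousOn
      (fun x : WeakSpace ℝ E => toWeakSpace ℝ E (act s ((toWeakSpace ℝ E).symm x)))
      (toWeakSpace ℝ E '' K))
    (hsan : SuperAsympNonexpansive act K) :
    ∃ x₀ ∈ K, ∀ s : S, act s x₀ = x₀ := by
  rcases isEmpty_or_nonempty S with _ | _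
  · exact hKne.imp fun x hx => ⟨hx, isEmptyElim⟩
  · exact common_fixed_point_separable_reversible_general hmulL hmulR hlrev hrrev K hKne hKconv
      hKcomp act hmaps haction hcontS hcontK fun x hx => hsan.exists_forall_norm_sub_le hx
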